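/- For any t ∈ ½ℤ, the identity Σ_{(j,n)∈J^F_{-t}} s(j) q_n^j ⊗ q_j^{n+1} = -Σ_{(i,m)∈J^F_{t-1}} q_i^{m+1} ⊗ q_m^i holds in g ⊗ g. -/

import Mathlib

open Finsupp TensorProduct
open scoped Classical

noncomputable section

/-- sign $(-1)^{p(a)p(b)}$ expressed through the parity signs ζa, ζb ∈ {±1}. -/
def sgn2 (za zb : ℂ) : ℂ := (1 + za + zb - za * zb) / 2

/-- `homIn ev odd a ζ` : `a` is homogeneous of parity sign `ζ`. -/
def homIn {P : Type*} [AddCommGroup P] [Module ℂ P]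
    (ev odd : Submodule ℂ P) (a : P) (z : ℂ) : Prop :=
  (z = 1 ∧ a ∈ ev) ∨ (z = -1 ∧ a ∈ odd)

/-- A finite simple Lie superalgebra over ℂ with an sl₂-triple (E,H,F), a compatible
even nondegenerate supersymmetric invariant bilinear form, the ad(H/2)-eigenspace
½ℤ-grading, and the dual bases of g^F = ker(ad F), g^E = ker(ad E) coming from
sl₂-representation theory. -/
structure NS where
  g : Type
  [iag : AddCommGroup g]
  [img : Module ℂ g]
  [ifd : FiniteDimensional ℂ g]
  /-- even and odd parts -/
  gev : Submodule ℂ g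
  godd : Submodule ℂ g
  gparity : IsCompl gev godd
  /-- the Lie bracket -/
  br : g →ₗ[ℂ] g →ₗ[ℂ] g
  br_parity : ∀ a b za zb, homIn gev godd a za → homIn gev godd b zb →
    homIn gev godd (br a b) (za * zb)
  br_skew : ∀ a b za zb, homIn gev godd a za → homIn gev godd b zb →
    br a b = -(sgn2 za zb) • br b a
  br_jacobi : ∀ a b c za zb, homIn gev godd a za → homIn gev godd b zb →
    br a (br b c) = br (br a b) c + sgn2 za zb • br b (br a c)
  simple : ∀ I : Submodule ℂ g, (∀ a, ∀ x ∈ I, br a x ∈ I) → I = ⊥ ∨ I = ⊤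
  nontriv : ∃ x : g, x ≠ 0
  /-- the invariant bilinear form -/
  B : g →ₗ[ℂ] g →ₗ[ℂ] ℂ
  B_supersym : ∀ a b za zb, homIn gev godd a za → homIn gev godd b zb →
    B a b = sgn2 za zb * B b a
  B_even : ∀ a ∈ gev, ∀ b ∈ godd, B a b = 0
  B_invariant : ∀ a b c, B (br a b) c = B a (br b c)
  B_nondeg : ∀ a, (∀ b, B a b = 0) → a = 0
  /-- the sl₂-triple -/
  E : g
  H : g
  F : g
  E_even : E ∈ gev
  H_even : H ∈ gev
  F_even : F ∈ gev
  tripleHE : br H E = (2 : ℂ) • E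
  tripleHF : br H F = (-2 : ℂ) • F
  tripleEF : br E F = H
  BEF : B E F = 1
  BHH : B H H = 2
  /-- the ad(H/2)-eigenspace decomposition g = ⊕_{i ∈ ½ℤ} g(i) -/
  gr : ℚ → Submodule ℂ g
  gr_eigen : ∀ i : ℚ, ∀ x ∈ gr i, br H x = ((2 * i : ℚ) : ℂ) • x
  gr_halfint : ∀ i : ℚ, (¬ ∃ m : ℤ, i = (m : ℚ) / 2) → gr i = ⊥
  gr_top : (⨆ i : ℚ, gr i) = ⊤
  /-- index set of the bases of g^F and g^E -/
  Jf : Type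
  [iJf : Fintype Jf]
  [idJf : DecidableEq Jf]
  /-- basis q_j of g^F = ker ad F -/
  qlo : Jf → g
  /-- basis q^j of g^E = ker ad E -/
  qhi : Jf → g
  /-- s(j) = s(q_j) = s(q^j) -/
  sj : Jf → ℂ
  /-- α_j, the ad(H/2)-weight of q^j -/
  αw : Jf → ℚ
  /-- 2α_j ∈ ℤ_{≥0} -/
  deg2 : Jf → ℕ
  deg2_eq : ∀ j, (deg2 j : ℚ) = 2 * αw j
  qlo_parity : ∀ j, homIn gev godd (qlo j) (sj j)
  qhi_parity : ∀ j, homIn gev godd (qhi j) (sj j)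
  qlo_ker : ∀ j, br F (qlo j) = 0
  qhi_ker : ∀ j, br E (qhi j) = 0
  qlo_wt : ∀ j, qlo j ∈ gr (-(αw j))
  qhi_wt : ∀ j, qhi j ∈ gr (αw j)
  qlo_indep : LinearIndependent ℂ qlo
  qhi_indep : LinearIndependent ℂ qhi
  qlo_span : ∀ x, br F x = 0 → x ∈ Submodule.span ℂ (Set.range qlo)
  qhi_span : ∀ x, br E x = 0 → x ∈ Submodule.span ℂ (Set.range qhi)
  pairqq : ∀ i j, B (qhi i) (qlo j) = if i = j then 1 else 0
  /-- q^j_n = (ad F)^n q^j -/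
  qup : Jf → ℕ → g
  qup_def : ∀ j n, qup j n = ((br F : Module.End ℂ g) ^ n) (qhi j)
  /-- dual basis q_j^n = ((-1)^n/((n!)² binom(2α_j,n))) (ad E)^n q_j -/
  qdn : Jf → ℕ → g
  qdn_def : ∀ j n, n ≤ deg2 j →
    qdn j n = (((-1 : ℂ) ^ n) / (((n.factorial : ℂ)) ^ 2 * ((deg2 j).choose n : ℂ))) •
      ((br E : Module.End ℂ g) ^ n) (qlo j)
  qdn_zero : ∀ j n, deg2 j < n → qdn j n = 0
  dualpair : ∀ i m j n, m ≤ deg2 i → n ≤ deg2 j →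
    B (qup i m) (qdn j n) = if i = j ∧ m = n then 1 else 0

attribute [instance] NS.iag NS.img NS.ifd NS.iJf NS.idJf

/-- The index set J^F_k = {(i,m) : q_i^m ∈ g(k)} (equivalently q^i_m ∈ g(-k)), as a finset. -/
def NS.JFset (S : NS) (k : ℚ) : Finset (S.Jf × ℕ) :=
  ((Finset.univ : Finset S.Jf) ×ˢ
      Finset.range (((Finset.univ : Finset S.Jf).sup S.deg2) + 1)).filter
    (fun p => p.2 ≤ S.deg2 p.1 ∧ S.qdn p.1 p.2 ∈ S.gr k)

/-!
Write `u` and `d` for `q^j_n` and `q_j^n`; they are dual bases, and the theorem says how the Casimir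
tensor `∑ u ⊗ d` behaves under the shift `d ↦ d⁺ : q_j^n ↦ q_j^{n+1}`. The form pairs weight `k`
with weight `-k`, so `d⁺_p` of weight `1 - t` expands as `∑ (d⁺_p | d_q) u_q` over the `d_q` of
weight `t - 1`, while `d⁺_q` of weight `t` expands as `∑ (d⁺_q | d_p) u_p` over the `d_p` of weight
`-t`. Both sides thus become sums of `u_p ⊗ u_q`, and their coefficients agree because the shift is
skew-adjoint and the form is supersymmetric:
`s(p) (d⁺_p | d_q) = -s(p) (d_p | d⁺_q) = -(d⁺_q | d_p)`.
Skew-adjointness of the shift is inherited from that of `ad F`, as `(ad F) d⁺ = -d` by duality below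
the top of a string. At the top `d⁺ = 0`, and `d` is orthogonal to the image of `ad E`, which
contains every `d⁺`.

The expansions need the `u` and the `d` to separate points. If `x ≠ 0` is orthogonal to every
`(ad F)^n q^j`, then so is its last nonzero image under the nilpotent `ad F`; that image lies in
`g^F`, and there the `q^j` separate points. The same holds with `E` and `q_j` for `F` and `q^j`.
-/

section Commutator

attribute [local instance] LieRing.ofAssociativeRing

theorem lie_pow_eq_smul {K A : Type*} [CommRing K] [Ring A] [Algebra K A] {h e : A} {c : K}
    (hcomm : ⁅h, e⁆ = c • e) (n : ℕ) : ⁅h, e ^ n⁆ = (n * c) • e ^ n := by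
  induction n with
  | zero => simp [Ring.lie_def]
  | succ n ih =>
    rw [Ring.lie_def] at hcomm ih ⊢
    calc h * e ^ (n + 1) - e ^ (n + 1) * h
        = (h * e ^ n - e ^ n * h) * e + e ^ n * (h * e - e * h) := by rw [pow_succ]; noncomm_ring
      _ = ((n + 1 : ℕ) * c) • e ^ (n + 1) := by
        rw [hcomm, ih, smul_mul_assoc, mul_smul_comm, ← pow_succ, ← add_smul]
        push_cast
        ring_nf

theorem isNilpotent_of_lie_eq_smul {K A : Type*} [Field K] [CharZero K] [Ring A] [Algebra K A]
    [FiniteDimensional K A] {h e : A} {c : K} (hc : c ≠ 0) (hcomm : ⁅h, e⁆ = c • e) :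
    IsNilpotent e := by
  by_contra hnil
  have heigen (n : ℕ) : (LieAlgebra.ad K A h).HasEigenvalue (n * c) :=
    Module.End.hasEigenvalue_of_hasEigenvector
      ⟨Module.End.mem_eigenspace_iff.2 (lie_pow_eq_smul hcomm n), fun h0 => hnil ⟨n, h0⟩⟩
  have hinj : Function.Injective fun n : ℕ => (n : K) * c := fun m n hmn =>
    Nat.cast_injective (mul_right_cancel₀ hc hmn)
  exact Set.infinite_of_injective_forall_mem hinj heigen
    (Module.End.finite_hasEigenvalue (LieAlgebra.ad K A h))

end Commutator

theorem eq_zero_of_isNilpotent_of_pow_apply {R M : Type*} [Semiring R] [AddCommMonoid M]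
    [Module R M] {e : Module.End R M} (he : IsNilpotent e) {x : M}
    (hx : ∀ n, e ((e ^ n) x) = 0 → (e ^ n) x = 0) : x = 0 := by
  obtain ⟨N, hN⟩ := he
  have hdescend (n : ℕ) : (e ^ n) x = 0 → x = 0 := by
    induction n with
    | zero => exact id
    | succ n ih => exact fun hn => ih (hx n (by rwa [pow_succ'] at hn))
  exact hdescend N (by rw [hN, LinearMap.zero_apply])

theorem eq_of_le_of_iSupIndep_of_iSup_eq_top {ι α : Type*} [CompleteLattice α] [IsModularLattice α]
    {s t : ι → α} (hle : s ≤ t) (ht : iSupIndep t) (hs : ⨆ i, s i = ⊤) : s = t := by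
  funext i
  refine eq_of_le_of_inf_le_of_le_sup (z := ⨆ (j) (_ : j ≠ i), s j) (hle i) ?_ ?_
  · exact ((ht i).mono_right (iSup₂_mono fun j _ => hle j)).eq_bot.trans_le bot_le
  · rw [← iSup_split_single, hs]
    exact le_top

theorem sgn2_one_left (z : ℂ) : sgn2 1 z = 1 := by
  rw [sgn2]
  ring

theorem sgn2_one_right (z : ℂ) : sgn2 z 1 = 1 := by
  rw [sgn2]
  ring

theorem sgn2_neg_one_neg_one : sgn2 (-1) (-1) = -1 := by norm_num [sgn2]

theorem homIn.smul {P : Type*} [AddCommGroup P] [Module ℂ P] {ev odd : Submodule ℂ P} {a : P}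
    {z : ℂ} (h : homIn ev odd a z) (c : ℂ) : homIn ev odd (c • a) z :=
  h.imp (And.imp_right (ev.smul_mem c)) (And.imp_right (odd.smul_mem c))

namespace NS

attribute [local instance] LieRing.ofAssociativeRing

variable (S : NS)

section EvenElements

variable {S} {X : S.g}

theorem br_skew_of_even (hX : X ∈ S.gev) (x : S.g) : S.br x X = -S.br X x := by
  obtain ⟨a, ha, b, hb, rfl⟩ :=
    Submodule.mem_sup.1 (S.gparity.sup_eq_top ▸ Submodule.mem_top : x ∈ S.gev ⊔ S.godd)
  have heven := S.br_skew a X 1 1 (.inl ⟨rfl, ha⟩) (.inl ⟨rfl, hX⟩)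
  have hodd := S.br_skew b X (-1) 1 (.inr ⟨rfl, hb⟩) (.inl ⟨rfl, hX⟩)
  rw [sgn2_one_right, neg_one_smul] at heven hodd
  rw [map_add, map_add, LinearMap.add_apply, heven, hodd, neg_add]

theorem lie_br_of_even {Y : S.g} (hX : X ∈ S.gev) (hY : Y ∈ S.gev) :
    ⁅(S.br X : Module.End ℂ S.g), S.br Y⁆ = S.br (S.br X Y) := by
  ext x
  have hjacobi := S.br_jacobi X Y x 1 1 (.inl ⟨rfl, hX⟩) (.inl ⟨rfl, hY⟩)
  rw [sgn2_one_left, one_smul] at hjacobi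
  exact sub_eq_iff_eq_add.2 hjacobi

theorem B_br_of_even (hX : X ∈ S.gev) (x y : S.g) :
    S.B (S.br X x) y = -S.B x (S.br X y) := by
  rw [← S.B_invariant, br_skew_of_even hX x, map_neg, LinearMap.neg_apply, neg_neg]

theorem B_br_pow_of_even (hX : X ∈ S.gev) (n : ℕ) (x y : S.g) :
    S.B (((S.br X : Module.End ℂ S.g) ^ n) x) y =
      (-1) ^ n * S.B x (((S.br X : Module.End ℂ S.g) ^ n) y) := by
  induction n generalizing y with
  | zero => simp
  | succ n ih =>
    rw [pow_succ', Module.End.mul_apply, B_br_of_even hX, ih, ← Module.End.mul_apply,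
      ← pow_succ, pow_succ', pow_succ']
    ring

end EvenElements

theorem mul_B_eq_B_swap {a b : S.g} {za zb : ℂ} (ha : homIn S.gev S.godd a za)
    (hb : homIn S.gev S.godd b zb) : za * S.B a b = S.B b a := by
  have hswap := S.B_supersym b a zb za hb ha
  rcases ha with ⟨rfl, -⟩ | ⟨rfl, ha⟩
  · rw [hswap, sgn2_one_right]
  · rcases hb with ⟨rfl, hb⟩ | ⟨rfl, -⟩
    · rw [sgn2_one_left, one_mul, S.B_even b hb a ha] at hswap
      rw [S.B_even b hb a ha, ← hswap, mul_zero]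
    · rw [hswap, sgn2_neg_one_neg_one]

theorem isSl2Triple_br :
    IsSl2Triple (L := Module.End ℂ S.g) (S.br S.H) (S.br S.E) (S.br S.F) where
  h_ne_zero h0 := by
    have hE : (2 : ℂ) • S.E = 0 := by rw [← S.tripleHE, h0, LinearMap.zero_apply]
    have hBEF := S.BEF
    rw [(smul_eq_zero.1 hE).resolve_left two_ne_zero, map_zero, LinearMap.zero_apply] at hBEF
    exact zero_ne_one hBEF
  lie_e_f := by rw [lie_br_of_even S.E_even S.F_even, S.tripleEF]
  lie_h_e_nsmul := by
    rw [lie_br_of_even S.H_even S.E_even, S.tripleHE, map_smul, two_smul, two_nsmul]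
  lie_h_f_nsmul := by
    rw [lie_br_of_even S.H_even S.F_even, S.tripleHF, map_smul, neg_smul, two_smul, two_nsmul]

theorem isNilpotent_br_E : IsNilpotent (S.br S.E : Module.End ℂ S.g) :=
  isNilpotent_of_lie_eq_smul two_ne_zero (S.isSl2Triple_br.lie_h_e_smul ℂ)

theorem isNilpotent_br_F : IsNilpotent (S.br S.F : Module.End ℂ S.g) :=
  isNilpotent_of_lie_eq_smul two_ne_zero (S.isSl2Triple_br.symm.lie_h_e_smul ℂ)

theorem hasPrimitiveVectorWith_qlo (j : S.Jf) :
    S.isSl2Triple_br.symm.HasPrimitiveVectorWith (S.qlo j) (S.deg2 j : ℂ) where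
  ne_zero := S.qlo_indep.ne_zero j
  lie_h := by
    have hweight : ((2 * -S.αw j : ℚ) : ℂ) = -S.deg2 j := by
      rw [mul_neg, ← S.deg2_eq, Rat.cast_neg, Rat.cast_natCast]
    rw [Module.End.lie_apply, LinearMap.neg_apply, S.gr_eigen _ _ (S.qlo_wt j), hweight,
      neg_smul, neg_neg]
  lie_e := S.qlo_ker j

theorem hasPrimitiveVectorWith_qhi (j : S.Jf) :
    S.isSl2Triple_br.HasPrimitiveVectorWith (S.qhi j) (S.deg2 j : ℂ) where
  ne_zero := S.qhi_indep.ne_zero j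
  lie_h := by
    rw [Module.End.lie_apply, S.gr_eigen _ _ (S.qhi_wt j), ← S.deg2_eq, Rat.cast_natCast]
  lie_e := S.qhi_ker j

theorem pow_br_E_qlo_eq_zero {j : S.Jf} {n : ℕ} (hn : S.deg2 j < n) :
    ((S.br S.E : Module.End ℂ S.g) ^ n) (S.qlo j) = 0 :=
  Module.End.pow_map_zero_of_le hn
    ((S.hasPrimitiveVectorWith_qlo j).pow_toEnd_f_eq_zero_of_eq_nat rfl)

theorem qup_eq_zero {j : S.Jf} {n : ℕ} (hn : S.deg2 j < n) : S.qup j n = 0 := by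
  rw [S.qup_def]
  exact Module.End.pow_map_zero_of_le hn
    ((S.hasPrimitiveVectorWith_qhi j).pow_toEnd_f_eq_zero_of_eq_nat rfl)

section Separation

variable {S} {x : S.g}

theorem eq_zero_of_br_F_eq_zero_of_B_qhi (hF : S.br S.F x = 0) (hB : ∀ j, S.B (S.qhi j) x = 0) :
    x = 0 := by
  obtain ⟨c, rfl⟩ := (Submodule.mem_span_range_iff_exists_fun ℂ).1 (S.qlo_span x hF)
  refine Finset.sum_eq_zero fun j _ => ?_
  have hcj : c j = 0 := by simpa [S.pairqq] using hB j
  rw [hcj, zero_smul]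

theorem eq_zero_of_br_E_eq_zero_of_B_qlo (hE : S.br S.E x = 0) (hB : ∀ j, S.B x (S.qlo j) = 0) :
    x = 0 := by
  obtain ⟨c, rfl⟩ := (Submodule.mem_span_range_iff_exists_fun ℂ).1 (S.qhi_span x hE)
  refine Finset.sum_eq_zero fun j _ => ?_
  have hcj : c j = 0 := by simpa [S.pairqq] using hB j
  rw [hcj, zero_smul]

theorem eq_zero_of_forall_B_qup (hx : ∀ j n, S.B (S.qup j n) x = 0) : x = 0 :=
  eq_zero_of_isNilpotent_of_pow_apply S.isNilpotent_br_F fun n hn =>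
    eq_zero_of_br_F_eq_zero_of_B_qhi hn fun j => by
      simpa [S.qup_def, B_br_pow_of_even S.F_even] using hx j n

theorem eq_zero_of_forall_B_qdn (hx : ∀ j n, n ≤ S.deg2 j → S.B x (S.qdn j n) = 0) : x = 0 := by
  refine eq_zero_of_isNilpotent_of_pow_apply S.isNilpotent_br_E fun n hn =>
    eq_zero_of_br_E_eq_zero_of_B_qlo hn fun j => ?_
  rw [B_br_pow_of_even S.E_even]
  rcases le_or_gt n (S.deg2 j) with hle | hlt
  · simpa [S.qdn_def j n hle, Nat.factorial_ne_zero, (Nat.choose_pos hle).ne'] using hx j n hle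
  · rw [S.pow_br_E_qlo_eq_zero hlt, map_zero, mul_zero]

end Separation

section Grading

theorem gr_eq_eigenspace (k : ℚ) :
    S.gr k = Module.End.eigenspace (S.br S.H : Module.End ℂ S.g) ((2 * k : ℚ) : ℂ) := by
  have hinj : Function.Injective fun i : ℚ => ((2 * i : ℚ) : ℂ) := fun a b hab => by
    simpa using hab
  exact congrFun (eq_of_le_of_iSupIndep_of_iSup_eq_top
    (fun i _ hx => Module.End.mem_eigenspace_iff.2 (S.gr_eigen i _ hx))
    ((Module.End.eigenspaces_iSupIndep (S.br S.H : Module.End ℂ S.g)).comp hinj) S.gr_top) k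

variable {S} {a b k : ℚ} {x y : S.g}

theorem mem_gr_iff : x ∈ S.gr k ↔ S.br S.H x = ((2 * k : ℚ) : ℂ) • x := by
  rw [gr_eq_eigenspace, Module.End.mem_eigenspace_iff]

theorem eq_of_mem_gr_of_mem_gr (hx : x ≠ 0) (ha : x ∈ S.gr a) (hb : x ∈ S.gr b) : a = b := by
  rw [mem_gr_iff] at ha hb
  simpa using smul_left_injective ℂ hx (ha.symm.trans hb)

theorem br_E_mem_gr (hx : x ∈ S.gr k) : S.br S.E x ∈ S.gr (k + 1) := by
  have hlie := LinearMap.congr_fun (S.isSl2Triple_br.lie_h_e_smul ℂ) x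
  rw [Ring.lie_def, LinearMap.sub_apply, Module.End.mul_apply, Module.End.mul_apply,
    mem_gr_iff.1 hx, map_smul, sub_eq_iff_eq_add] at hlie
  rw [mem_gr_iff, hlie, LinearMap.smul_apply, ← add_smul]
  push_cast
  ring_nf

theorem add_eq_zero_of_B_ne_zero (hx : x ∈ S.gr a) (hy : y ∈ S.gr b) (hB : S.B x y ≠ 0) :
    a + b = 0 := by
  have hinv := B_br_of_even S.H_even x y
  rw [mem_gr_iff.1 hx, mem_gr_iff.1 hy, map_smul, map_smul, LinearMap.smul_apply, smul_eq_mul,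
    smul_eq_mul, ← neg_mul] at hinv
  have hweights : 2 * a = -(2 * b) := by exact_mod_cast mul_right_cancel₀ hB hinv
  linarith

end Grading

section DualBasis

theorem exists_qdn_eq_smul (j : S.Jf) (n : ℕ) :
    ∃ c : ℂ, S.qdn j n = c • ((S.br S.E : Module.End ℂ S.g) ^ n) (S.qlo j) := by
  rcases le_or_gt n (S.deg2 j) with hle | hlt
  · exact ⟨_, S.qdn_def j n hle⟩
  · exact ⟨0, by rw [S.qdn_zero j n hlt, zero_smul]⟩

theorem qdn_parity (j : S.Jf) (n : ℕ) : homIn S.gev S.godd (S.qdn j n) (S.sj j) := by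
  obtain ⟨c, hc⟩ := S.exists_qdn_eq_smul j n
  rw [hc]
  refine homIn.smul ?_ c
  clear hc
  induction n with
  | zero => exact S.qlo_parity j
  | succ n ih =>
    rw [pow_succ', Module.End.mul_apply, ← one_mul (S.sj j)]
    exact S.br_parity _ _ _ _ (.inl ⟨rfl, S.E_even⟩) ih

theorem qdn_mem_gr (j : S.Jf) (n : ℕ) : S.qdn j n ∈ S.gr (n - S.αw j) := by
  obtain ⟨c, hc⟩ := S.exists_qdn_eq_smul j n
  rw [hc]
  refine Submodule.smul_mem _ c ?_
  clear hc
  induction n with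
  | zero => simpa using S.qlo_wt j
  | succ n ih =>
    rw [pow_succ', Module.End.mul_apply, Nat.cast_succ, add_sub_right_comm]
    exact br_E_mem_gr ih

theorem qdn_succ_mem_range_br_E (j : S.Jf) (n : ℕ) :
    S.qdn j (n + 1) ∈ LinearMap.range (S.br S.E) := by
  obtain ⟨c, hc⟩ := S.exists_qdn_eq_smul j (n + 1)
  rw [hc, pow_succ', Module.End.mul_apply]
  exact Submodule.smul_mem _ c (LinearMap.mem_range_self _ _)

theorem br_E_qdn_deg2 (j : S.Jf) : S.br S.E (S.qdn j (S.deg2 j)) = 0 := by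
  obtain ⟨c, hc⟩ := S.exists_qdn_eq_smul j (S.deg2 j)
  rw [hc, map_smul, ← Module.End.mul_apply, ← pow_succ',
    S.pow_br_E_qlo_eq_zero (Nat.lt_succ_self _), smul_zero]

variable {S} {i j : S.Jf} {m n : ℕ}

theorem B_qup_qdn (hn : n ≤ S.deg2 j) :
    S.B (S.qup i m) (S.qdn j n) = if i = j ∧ m = n then 1 else 0 := by
  rcases le_or_gt m (S.deg2 i) with hm | hm
  · exact S.dualpair i m j n hm hn
  · rw [S.qup_eq_zero hm, map_zero, LinearMap.zero_apply, if_neg]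
    rintro ⟨rfl, rfl⟩
    exact hm.not_ge hn

theorem qdn_ne_zero (hn : n ≤ S.deg2 j) : S.qdn j n ≠ 0 := fun h0 => by
  simpa [h0] using B_qup_qdn (i := j) (m := n) hn

theorem br_F_qdn_succ (hn : n < S.deg2 j) : S.br S.F (S.qdn j (n + 1)) = -S.qdn j n := by
  refine eq_neg_of_add_eq_zero_left (eq_zero_of_forall_B_qup fun i m => ?_)
  have hF : S.br S.F (S.qup i m) = S.qup i (m + 1) := by
    rw [S.qup_def, S.qup_def, pow_succ', Module.End.mul_apply]
  have hinv := B_br_of_even S.F_even (S.qup i m) (S.qdn j (n + 1))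
  rw [hF, B_qup_qdn hn] at hinv
  rw [map_add, B_qup_qdn hn.le, ← neg_eq_iff_eq_neg.2 hinv]
  simp

theorem B_qdn_succ_qdn_deg2 : S.B (S.qdn i (m + 1)) (S.qdn j (S.deg2 j)) = 0 := by
  obtain ⟨x, hx⟩ := S.qdn_succ_mem_range_br_E i m
  rw [← hx, B_br_of_even S.E_even, br_E_qdn_deg2, map_zero, neg_zero]

theorem B_qdn_deg2_qdn_succ : S.B (S.qdn i (S.deg2 i)) (S.qdn j (n + 1)) = 0 := by
  rw [← S.mul_B_eq_B_swap (S.qdn_parity j _) (S.qdn_parity i _), B_qdn_succ_qdn_deg2, mul_zero]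

theorem B_qdn_succ_left (hm : m ≤ S.deg2 i) (hn : n ≤ S.deg2 j) :
    S.B (S.qdn i (m + 1)) (S.qdn j n) = -S.B (S.qdn i m) (S.qdn j (n + 1)) := by
  rcases hn.lt_or_eq with hn | rfl
  · rcases hm.lt_or_eq with hm | rfl
    · have hinv := B_br_of_even S.F_even (S.qdn i (m + 1)) (S.qdn j (n + 1))
      rw [br_F_qdn_succ hm, br_F_qdn_succ hn, map_neg, map_neg, LinearMap.neg_apply,
        neg_neg] at hinv
      exact hinv.symm
    · rw [B_qdn_deg2_qdn_succ, S.qdn_zero i _ (Nat.lt_succ_self _), map_zero,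
        LinearMap.zero_apply, neg_zero]
  · rw [B_qdn_succ_qdn_deg2, S.qdn_zero j _ (Nat.lt_succ_self _), map_zero, neg_zero]

theorem sj_mul_B_qdn_succ (hm : m ≤ S.deg2 i) (hn : n ≤ S.deg2 j) :
    S.sj i * S.B (S.qdn i (m + 1)) (S.qdn j n) = -S.B (S.qdn j (n + 1)) (S.qdn i m) := by
  rw [B_qdn_succ_left hm hn, mul_neg,
    S.mul_B_eq_B_swap (S.qdn_parity i m) (S.qdn_parity j (n + 1))]

end DualBasis

section Expansion

variable {S} {k : ℚ}

theorem mem_JFset {p : S.Jf × ℕ} :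
    p ∈ S.JFset k ↔ p.2 ≤ S.deg2 p.1 ∧ (p.2 - S.αw p.1 : ℚ) = k := by
  have hsup : S.deg2 p.1 ≤ Finset.univ.sup S.deg2 := Finset.le_sup (Finset.mem_univ _)
  have hgr (hle : p.2 ≤ S.deg2 p.1) :
      S.qdn p.1 p.2 ∈ S.gr k ↔ (p.2 - S.αw p.1 : ℚ) = k :=
    ⟨eq_of_mem_gr_of_mem_gr (qdn_ne_zero hle) (S.qdn_mem_gr _ _), fun hk => hk ▸ S.qdn_mem_gr _ _⟩
  simp only [JFset, Finset.mem_filter, Finset.mem_product, Finset.mem_univ, Finset.mem_range,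
    true_and]
  constructor
  · exact fun ⟨_, hle, hmem⟩ => ⟨hle, (hgr hle).1 hmem⟩
  · exact fun ⟨hle, hk⟩ => ⟨by omega, hle, (hgr hle).2 hk⟩

theorem qdn_succ_mem_gr {p : S.Jf × ℕ} (hp : p ∈ S.JFset k) :
    S.qdn p.1 (p.2 + 1) ∈ S.gr (k + 1) := by
  rw [← (mem_JFset.1 hp).2, ← add_sub_right_comm, ← Nat.cast_succ]
  exact S.qdn_mem_gr _ _

theorem sum_B_qdn_smul_qup {x : S.g} (hx : x ∈ S.gr k) :
    ∑ p ∈ S.JFset (-k), S.B x (S.qdn p.1 p.2) • S.qup p.1 p.2 = x := by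
  refine (sub_eq_zero.1 (eq_zero_of_forall_B_qdn fun j n hn => ?_)).symm
  rw [map_sub, LinearMap.sub_apply, sub_eq_zero, map_sum, LinearMap.sum_apply]
  have hpair (p : S.Jf × ℕ) : S.B (S.B x (S.qdn p.1 p.2) • S.qup p.1 p.2) (S.qdn j n) =
      if p = (j, n) then S.B x (S.qdn j n) else 0 := by
    rw [map_smul, LinearMap.smul_apply, B_qup_qdn hn, smul_eq_mul, mul_ite, mul_one, mul_zero]
    simp only [Prod.ext_iff]
    split_ifs with h
    · rw [h.1, h.2]
    · rfl
  rw [Finset.sum_congr rfl fun p _ => hpair p, Finset.sum_ite_eq']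
  split_ifs with hmem
  · rfl
  · by_contra hB
    have hweight := add_eq_zero_of_B_ne_zero hx (S.qdn_mem_gr j n) hB
    exact hmem (mem_JFset.2 ⟨hn, by linarith⟩)

end Expansion

end NS

/-- **Lemma 3.3** (Suh, "Structures of (supersymmetric) classical W-algebras").
For any t ∈ ½ℤ,
Σ_{(j,n)∈J^F_{-t}} s(j) q_n^j ⊗ q_j^{n+1} = -Σ_{(i,m)∈J^F_{t-1}} q_i^{m+1} ⊗ q_m^i
in g ⊗ g. -/
theorem statement0 (S : NS) (t : ℚ) (ht : ∃ m : ℤ, t = (m : ℚ) / 2) :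
    ∑ p ∈ S.JFset (-t), S.sj p.1 • (S.qup p.1 p.2 ⊗ₜ[ℂ] S.qdn p.1 (p.2 + 1))
      = - ∑ p ∈ S.JFset (t - 1), S.qdn p.1 (p.2 + 1) ⊗ₜ[ℂ] S.qup p.1 p.2 := by
  have hneg : -(-t + 1) = t - 1 := by ring
  have hleft : ∀ p ∈ S.JFset (-t), S.sj p.1 • (S.qup p.1 p.2 ⊗ₜ[ℂ] S.qdn p.1 (p.2 + 1)) =
      ∑ q ∈ S.JFset (t - 1), (S.sj p.1 * S.B (S.qdn p.1 (p.2 + 1)) (S.qdn q.1 q.2)) •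
        (S.qup p.1 p.2 ⊗ₜ[ℂ] S.qup q.1 q.2) := fun p hp => by
    conv_lhs => rw [← NS.sum_B_qdn_smul_qup (NS.qdn_succ_mem_gr hp)]
    simp only [tmul_sum, tmul_smul, Finset.smul_sum, smul_smul, hneg]
  have hright : ∀ q ∈ S.JFset (t - 1), S.qdn q.1 (q.2 + 1) ⊗ₜ[ℂ] S.qup q.1 q.2 =
      ∑ p ∈ S.JFset (-t), S.B (S.qdn q.1 (q.2 + 1)) (S.qdn p.1 p.2) •
        (S.qup p.1 p.2 ⊗ₜ[ℂ] S.qup q.1 q.2) := fun q hq => by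
    conv_lhs => rw [← NS.sum_B_qdn_smul_qup (NS.qdn_succ_mem_gr hq)]
    simp only [sum_tmul, smul_tmul', sub_add_cancel]
  rw [Finset.sum_congr rfl hleft, Finset.sum_congr rfl hright, Finset.sum_comm]
  simp only [← Finset.sum_neg_distrib]
  refine Finset.sum_congr rfl fun q hq => Finset.sum_congr rfl fun p hp => ?_
  rw [NS.sj_mul_B_qdn_succ (NS.mem_JFset.1 hp).1 (NS.mem_JFset.1 hq).1, neg_smul]

end
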